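/- Let I, C : ℕ → ℝ be a Gregory pair, i.e. 0 < I 0 < C 0, I (n+1) = Real.sqrt (C n * I n), C (n+1) = 2 * C n * I (n+1) / (C n + I (n+1)). Then for every n, C n - I n ≤ (C 0 - I 0) / 2 ^ n. -/

import Mathlib

/-!
Write `C n = s ^ 2` and `I n = t ^ 2` with `0 < t < s`. Then `I (n + 1) = s * t` and
`C (n + 1) = 2 * s ^ 2 * t / (s + t)`, so that
`C (n + 1) - I (n + 1) = s * t * (s - t) / (s + t)`. This is positive, hence `0 < I < C` is
preserved, and it is at most `(s ^ 2 - t ^ 2) / 2` because `2 * s * t ≤ (s + t) ^ 2`.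
Each step therefore at least halves the difference.
-/

/-- One Gregory step from `0 < i < c` keeps the order and at least halves the difference. -/
lemma gregory_step {i c : ℝ} (hi : 0 < i) (hic : i < c) :
    0 < √(c * i) ∧ √(c * i) < 2 * c * √(c * i) / (c + √(c * i)) ∧
      2 * c * √(c * i) / (c + √(c * i)) - √(c * i) ≤ (c - i) / 2 := by
  have hc : 0 < c := hi.trans hic
  obtain ⟨t, ht, rfl⟩ : ∃ t, 0 < t ∧ t ^ 2 = i := ⟨√i, Real.sqrt_pos.2 hi, Real.sq_sqrt hi.le⟩
  obtain ⟨s, hs, rfl⟩ : ∃ s, 0 < s ∧ s ^ 2 = c := ⟨√c, Real.sqrt_pos.2 hc, Real.sq_sqrt hc.le⟩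
  have hts : t < s := lt_of_pow_lt_pow_left₀ 2 hs.le hic
  have hroot : √(s ^ 2 * t ^ 2) = s * t := by
    rw [← mul_pow, Real.sqrt_sq (by positivity)]
  have hdiff : 2 * s ^ 2 * (s * t) / (s ^ 2 + s * t) - s * t = s * t * (s - t) / (s + t) := by
    field_simp
    ring
  rw [hroot]
  refine ⟨by positivity, ?_, ?_⟩
  · have hst : 0 < s - t := sub_pos.2 hts
    rw [← sub_pos, hdiff]
    positivity
  · rw [hdiff, div_le_iff₀ (by positivity)]
    nlinarith [mul_nonneg (sub_nonneg.2 hts.le) (add_nonneg (sq_nonneg s) (sq_nonneg t))]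

theorem gregory_pair_diff_le_geometric
    (I C : ℕ → ℝ)
    (h0 : 0 < I 0) (h1 : I 0 < C 0)
    (hI : ∀ n, I (n + 1) = Real.sqrt (C n * I n))
    (hC : ∀ n, C (n + 1) = 2 * C n * I (n + 1) / (C n + I (n + 1))) :
    ∀ n, C n - I n ≤ (C 0 - I 0) / 2 ^ n := by
  have step : ∀ n, 0 < I n → I n < C n →
      0 < I (n + 1) ∧ I (n + 1) < C (n + 1) ∧ C (n + 1) - I (n + 1) ≤ (C n - I n) / 2 := by
    intro n hn hlt
    rw [hC, hI]
    exact gregory_step hn hlt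
  have order : ∀ n, 0 < I n ∧ I n < C n := by
    intro n
    induction n with
    | zero => exact ⟨h0, h1⟩
    | succ n ih =>
      obtain ⟨hpos, hlt, -⟩ := step n ih.1 ih.2
      exact ⟨hpos, hlt⟩
  intro n
  induction n with
  | zero => simp
  | succ n ih =>
    calc C (n + 1) - I (n + 1) ≤ (C n - I n) / 2 := (step n (order n).1 (order n).2).2.2
      _ ≤ (C 0 - I 0) / 2 ^ n / 2 := by gcongr
      _ = (C 0 - I 0) / 2 ^ (n + 1) := by rw [pow_succ, div_div]
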